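/- Let X = ℝⁿ, T ∈ ℕ, x₀ ∈ X, and let f : X^{T+1} → EReal be Borel measurable. Then sup_{μ ∈ M^T(x₀)} μ[f] = sup_M E[f(M₀,…,M_T)], where the supremum on the right-hand side is taken over all ℝⁿ-valued martingales M₀,…,M_T with M₀ = x₀, each on its own filtered probability space (with the expectation of the EReal-valued random variable f(M₀,…,M_T) computed using the convention ∞ − ∞ = −∞). -/

import Mathlib

/-- A finitely supported probability measure on `X^{T+1}` under which the coordinate
process is a martingale in its natural filtration, starting at `x₀`; an element of
`M^T(x₀)` (the law of a simple martingale `M₀, …, M_T` with `M₀ = x₀`).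
The martingale property is expressed by testing the increment `π(t+1) - π(t)`
against all functions `h` of the path depending only on the first `t+1` coordinates. -/
structure MartLaw (X : Type*) [AddCommGroup X] [Module ℝ X] (T : ℕ) (x₀ : X) where
  supp : Finset (Fin (T + 1) → X)
  w : (Fin (T + 1) → X) → ℝ
  nonneg : ∀ π, 0 ≤ w π
  zero_off : ∀ π ∉ supp, w π = 0
  total : ∑ π ∈ supp, w π = 1
  init : ∀ π ∈ supp, w π ≠ 0 → π 0 = x₀
  mart : ∀ t : Fin T, ∀ h : (Fin (T + 1) → X) → ℝ,
    (∀ π π' : Fin (T + 1) → X, (∀ s : Fin (T + 1), s ≤ t.castSucc → π s = π' s) → h π = h π') →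
    ∑ π ∈ supp, (w π * h π) • (π t.succ - π t.castSucc) = 0

/-- The integral `μ[f]` of an `EReal`-valued function on path space under a finitely
supported martingale law, as a finite sum in `EReal`. -/
noncomputable def MartLaw.exp {X : Type*} [AddCommGroup X] [Module ℝ X] {T : ℕ} {x₀ : X}
    (μ : MartLaw X T x₀) (f : (Fin (T + 1) → X) → EReal) : EReal :=
  ∑ π ∈ μ.supp, (μ.w π : EReal) * f π

open MeasureTheory

/-- The positive part of an extended real number, valued in `ℝ≥0∞`. -/
noncomputable def erealPosPart (x : EReal) : ENNReal :=
  if x = ⊤ then ⊤ else ENNReal.ofReal x.toReal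

/-- The expectation of an `EReal`-valued random variable, computed with the convention
`∞ - ∞ = -∞` (note that `⊤ - ⊤ = ⊥` in `EReal`). -/
noncomputable def erealExp {Ω : Type*} [MeasurableSpace Ω] (μ : Measure Ω)
    (g : Ω → EReal) : EReal :=
  ((∫⁻ ω, erealPosPart (g ω) ∂μ : ENNReal) : EReal)
    - ((∫⁻ ω, erealPosPart (-g ω) ∂μ : ENNReal) : EReal)

open Filter Matrix ProbabilityTheory Topology

/-!
Given the law `P` of a martingale and a `P`-integrable `g`, a simple martingale law with the same
integral of `g` and charging no point of a given null set is built by induction on `T`. Disintegrate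
`P` over its first step: almost every conditional law `κ_x` of `M₁, …, M_T` given `M₁ = x` is again
the law of a martingale, now started at `x`, and the pairs `(x, ∫ g dκ_x)` have mean
`(x₀, ∫ g dP)`. The mean of a random vector in a finite-dimensional space lies in every convex set
containing the vector almost surely, closed or not, so `(x₀, ∫ g dP)` is a *finite* convex
combination of such pairs. Each of the finitely many `κ_x` is replaced by a simple law by induction,
and these laws are glued after a first jump from `x₀`. An `EReal`-valued `f` is approximated by the
integrable `g ≤ f`, an inequality that survives off a null set.

Conversely, a simple martingale law is itself the law of a martingale on path space.
-/

theorem exists_linearMap_forall_le_of_notMem_convex {E : Type*} [NormedAddCommGroup E]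
    [NormedSpace ℝ E] [FiniteDimensional ℝ E] {C : Set E} (hC : Convex ℝ C) (hne : C.Nonempty)
    {x : E} (hx : x ∉ C) : ∃ g : E →ₗ[ℝ] ℝ, g ≠ 0 ∧ ∀ y ∈ C, g y ≤ g x := by
  by_cases hint : (interior C).Nonempty
  · obtain ⟨g, hg, hle⟩ := geometric_hahn_banach_of_nonempty_interior_point hC
      (fun h ↦ hx (interior_subset h)) hint
    exact ⟨g, by exact_mod_cast hg, hle⟩
  rw [hC.interior_nonempty_iff_affineSpan_eq_top,
    AffineSubspace.affineSpan_eq_top_iff_vectorSpan_eq_top_of_nonempty _ _ _ hne] at hint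
  obtain ⟨g, hg, hker⟩ := Submodule.exists_le_ker_of_lt_top _ (lt_top_iff_ne_top.2 hint)
  obtain ⟨y₀, hy₀⟩ := hne
  have hconst : ∀ y ∈ C, g y = g y₀ := fun y hy ↦ by
    simpa [sub_eq_zero] using hker (vsub_mem_vectorSpan ℝ hy hy₀)
  rcases le_total (g y₀) (g x) with h | h
  · exact ⟨g, hg, fun y hy ↦ (hconst y hy).trans_le h⟩
  · exact ⟨-g, neg_ne_zero.2 hg, fun y hy ↦ neg_le_neg (h.trans_eq (hconst y hy).symm)⟩

section Barycentre

variable {Ω E : Type*} {mΩ : MeasurableSpace Ω} {μ : Measure Ω} [IsProbabilityMeasure μ]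
  [NormedAddCommGroup E] [NormedSpace ℝ E] [FiniteDimensional ℝ E] {φ : Ω → E}

theorem integral_mem_of_convex {C : Set E} (hC : Convex ℝ C) (hφ : Integrable φ μ)
    (hφC : ∀ᵐ ω ∂μ, φ ω ∈ C) : ∫ ω, φ ω ∂μ ∈ C := by
  set b := ∫ ω, φ ω ∂μ with hb
  by_contra hbC
  -- Supporting `C` at `b` inside the smallest subspace `W` that carries `φ - b` gives a functional
  -- vanishing on `φ - b`, which contradicts the minimality of `W`.
  obtain ⟨W, hW⟩ := exists_minimal_of_wellFoundedLT
    (fun W : Submodule ℝ E ↦ ∀ᵐ ω ∂μ, φ ω - b ∈ W) ⟨⊤, by simp⟩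
  have hne : {w : W | (w : E) + b ∈ C}.Nonempty := by
    obtain ⟨ω, hωC, hωW⟩ := (hφC.and hW.prop).exists
    exact ⟨⟨φ ω - b, hωW⟩, by simpa using hωC⟩
  obtain ⟨g, hg, hle⟩ := exists_linearMap_forall_le_of_notMem_convex
    (C := {w : W | (w : E) + b ∈ C}) ((hC.translate_preimage_left b).linear_preimage W.subtype) hne
    (x := 0) (by simpa using hbC)
  obtain ⟨G, rfl⟩ := g.exists_extend
  have hG : Integrable (fun ω ↦ G (φ ω - b)) μ :=
    G.toContinuousLinearMap.integrable_comp (hφ.sub (integrable_const b))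
  have hG_integral : ∫ ω, G (φ ω - b) ∂μ = 0 := by
    have := G.toContinuousLinearMap.integral_comp_comm (hφ.sub (integrable_const b))
    simpa [integral_sub hφ (integrable_const b), ← hb] using this
  have hG_nonpos : ∀ᵐ ω ∂μ, G (φ ω - b) ≤ 0 := by
    filter_upwards [hφC, hW.prop] with ω hωC hωW
    simpa using hle ⟨φ ω - b, hωW⟩ (by simpa using hωC)
  have hG_zero : ∀ᵐ ω ∂μ, G (φ ω - b) = 0 := by
    have := (integral_eq_zero_iff_of_nonneg_ae (hG_nonpos.mono fun ω hω ↦ neg_nonneg.2 hω)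
      hG.neg).1 (by rw [integral_neg, hG_integral, neg_zero])
    exact this.mono fun ω hω ↦ neg_eq_zero.1 hω
  have hker : W ≤ LinearMap.ker G :=
    (hW.le_of_le (hW.prop.and hG_zero) inf_le_left).trans inf_le_right
  exact hg (LinearMap.ext fun w ↦ hker w.2)

theorem exists_convexCombination_eq_integral (hφ : Integrable φ μ) {p : Ω → Prop}
    (hp : ∀ᵐ ω ∂μ, p ω) :
    ∃ (ι : Type) (_ : Fintype ι) (l : ι → ℝ) (z : ι → Ω), (∀ i, 0 ≤ l i) ∧ ∑ i, l i = 1 ∧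
      (∀ i, p (z i)) ∧ ∑ i, l i • φ (z i) = ∫ ω, φ ω ∂μ := by
  have hmem : ∫ ω, φ ω ∂μ ∈ convexHull ℝ (φ '' {ω | p ω}) :=
    integral_mem_of_convex (convex_convexHull ℝ _) hφ
      (hp.mono fun ω hω ↦ subset_convexHull ℝ _ ⟨ω, hω, rfl⟩)
  obtain ⟨ι, _, l, y, hl, hl_sum, hy, hy_sum⟩ := mem_convexHull_iff_exists_fintype.1 hmem
  choose z hz hzy using hy
  exact ⟨ι, ‹_›, l, z, hl, hl_sum, hz, by simpa only [hzy] using hy_sum⟩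

end Barycentre

section FinMartingale

variable {Ω E : Type*} {mΩ : MeasurableSpace Ω} {μ : Measure Ω} [IsFiniteMeasure μ]
  [NormedAddCommGroup E] [NormedSpace ℝ E] [CompleteSpace E] {T : ℕ}
  {ℱ : Filtration (Fin (T + 1)) mΩ} {M : Fin (T + 1) → Ω → E}

theorem martingale_of_condExp_succ (hadp : StronglyAdapted ℱ M)
    (hint : ∀ t, Integrable (M t) μ)
    (hM : ∀ t : Fin T, M t.castSucc =ᵐ[μ] μ[M t.succ | ℱ t.castSucc]) : Martingale M ℱ μ := by
  refine ⟨hadp, fun i j hij ↦ ?_⟩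
  induction j using Fin.induction with
  | zero =>
    obtain rfl := le_antisymm hij (Fin.zero_le i)
    rw [condExp_of_stronglyMeasurable (ℱ.le 0) (hadp 0) (hint 0)]
  | succ t ih =>
    rcases hij.eq_or_lt with rfl | hlt
    · rw [condExp_of_stronglyMeasurable (ℱ.le _) (hadp _) (hint _)]
    · have hle : i ≤ t.castSucc := Fin.le_castSucc_iff.2 hlt
      exact (ℱ.condExp_condExp (M t.succ) hle).symm.trans
        ((condExp_congr_ae (hM t).symm).trans (ih hle))

theorem martingale_iff_forall_setIntegral_sub_eq_zero :
    Martingale M ℱ μ ↔ StronglyAdapted ℱ M ∧ (∀ t, Integrable (M t) μ) ∧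
      ∀ (t : Fin T) (B : Set Ω), MeasurableSet[ℱ t.castSucc] B →
        ∫ ω in B, (M t.succ ω - M t.castSucc ω) ∂μ = 0 := by
  refine ⟨fun h ↦ ⟨h.1, h.integrable, fun t B hB ↦ ?_⟩, fun ⟨hadp, hint, hM⟩ ↦
    martingale_of_condExp_succ hadp hint fun t ↦ ?_⟩
  · rw [integral_sub (h.integrable _).integrableOn (h.integrable _).integrableOn,
      h.setIntegral_eq t.castSucc_lt_succ.le hB, sub_self]
  · refine ae_eq_condExp_of_forall_setIntegral_eq (ℱ.le _) (hint _)
      (fun _ _ _ ↦ (hint _).integrableOn) (fun B hB _ ↦ ?_) (hadp _).aestronglyMeasurable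
    have := hM t B hB
    rw [integral_sub (hint _).integrableOn (hint _).integrableOn, sub_eq_zero] at this
    exact this.symm

end FinMartingale

section PathFiltration

variable {Ω ι : Type*} [Preorder ι] {X : ι → Type*} [∀ i, MeasurableSpace (X i)]

theorem measurable_piLE_iff {m : MeasurableSpace Ω} {i : ι} {f : Ω → ∀ j, X j} :
    Measurable[m, Filtration.piLE (X := X) i] f ↔ ∀ j ≤ i, Measurable fun ω ↦ f ω j :=
  (measurable_comap_iff (g := Preorder.restrictLe i)).trans <| measurable_pi_iff.trans
    ⟨fun h j hj ↦ h ⟨j, hj⟩, fun h j ↦ h j j.2⟩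

theorem measurable_apply_piLE {i j : ι} (hij : i ≤ j) :
    Measurable[Filtration.piLE (X := X) j] fun π : ∀ i, X i ↦ π i :=
  measurable_piLE_iff.1 (@measurable_id _ (Filtration.piLE (X := X) j)) i hij

theorem countablyGenerated_piLE [Countable ι] [∀ i, StandardBorelSpace (X i)]
    (i : ι) : @MeasurableSpace.CountablyGenerated _ (Filtration.piLE (X := X) i) :=
  MeasurableSpace.CountablyGenerated.comap _

end PathFiltration

section Conditioning

variable {Ω E : Type*} {m mΩ : MeasurableSpace Ω} [NormedAddCommGroup E] [NormedSpace ℝ E]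

theorem setIntegral_eq_zero_of_generateFrom {μ : Measure Ω} {φ : Ω → E} (hφ : Integrable φ μ)
    (hm : m ≤ mΩ) {S : Set (Set Ω)} (hS : m = MeasurableSpace.generateFrom S) (hpi : IsPiSystem S)
    (huniv : Set.univ ∈ S) (hSφ : ∀ B ∈ S, ∫ ω in B, φ ω ∂μ = 0) {B : Set Ω}
    (hB : MeasurableSet[m] B) : ∫ ω in B, φ ω ∂μ = 0 := by
  induction B, hB using MeasurableSpace.induction_on_inter hS hpi with
  | empty => simp
  | basic B hB => exact hSφ B hB
  | compl B hB ih => simpa [ih, ← hSφ _ huniv] using integral_add_compl (hm B hB) hφ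
  | iUnion B hdisj hB ih =>
    rw [integral_iUnion (fun i ↦ hm _ (hB i)) hdisj hφ.integrableOn]
    simp [ih]

theorem exists_countable_isPiSystem_generateFrom_eq (Ω : Type*) [m : MeasurableSpace Ω]
    [MeasurableSpace.CountablyGenerated Ω] :
    ∃ S : Set (Set Ω), S.Countable ∧ IsPiSystem S ∧ Set.univ ∈ S ∧
      m = MeasurableSpace.generateFrom S := by
  let S₀ := MeasurableSpace.countableGeneratingSet Ω
  have hS₀ := isSetAlgebra_generateSetAlgebra (𝒜 := S₀)
  exact ⟨generateSetAlgebra S₀,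
    countable_generateSetAlgebra MeasurableSpace.countable_countableGeneratingSet,
    fun s hs t ht _ ↦ hS₀.inter_mem hs ht, hS₀.univ_mem, by
      rw [generateFrom_generateSetAlgebra_eq, MeasurableSpace.generateFrom_countableGeneratingSet]⟩

variable [StandardBorelSpace Ω] {μ : Measure Ω} [IsFiniteMeasure μ]

theorem ae_ae_condExpKernel (hm : m ≤ mΩ) {p : Ω → Prop} (hp : ∀ᵐ ω ∂μ, p ω) :
    ∀ᵐ ω ∂μ, ∀ᵐ ω' ∂condExpKernel μ m ω, p ω' := by
  rw [← condExpKernel_comp_trim (μ := μ) hm] at hp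
  exact ae_of_ae_trim hm (Measure.ae_ae_of_ae_comp hp)

theorem ae_ae_condExpKernel_eq {X : Type*} [MeasurableSpace X] [MeasurableEq X] (hm : m ≤ mΩ)
    {f : Ω → X} (hf : Measurable[m] f) :
    ∀ᵐ ω ∂μ, ∀ᵐ ω' ∂condExpKernel μ m ω, f ω = f ω' := by
  refine ae_of_ae_trim hm (Measure.ae_ae_of_ae_compProd (p := fun q ↦ f q.1 = f q.2) ?_)
  rw [compProd_trim_condExpKernel hm]
  have hdiag : Measurable[mΩ, m.prod mΩ] (Function.diag : Ω → Ω × Ω) :=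
    (measurable_id'' hm).prodMk measurable_id
  let := m.prod mΩ
  exact (ae_map_iff hdiag.aemeasurable (measurableSet_eq_fun (hf.comp measurable_fst)
    ((hf.mono hm le_rfl).comp measurable_snd))).2 (ae_of_all _ fun _ ↦ rfl)

variable [CompleteSpace E]

theorem integral_integral_condExpKernel (hm : m ≤ mΩ) {φ : Ω → E} (hφ : Integrable φ μ) :
    ∫ ω, ∫ ω', φ ω' ∂condExpKernel μ m ω ∂μ = ∫ ω, φ ω ∂μ := by
  rw [← integral_congr_ae (condExp_ae_eq_integral_condExpKernel hm hφ), integral_condExp hm]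

theorem ae_setIntegral_condExpKernel_eq_zero (hm : m ≤ mΩ) {φ : Ω → E} (hφ : Integrable φ μ)
    {B : Set Ω} (hB : MeasurableSet[mΩ] B)
    (hφB : ∀ D, MeasurableSet[m] D → ∫ ω in D ∩ B, φ ω ∂μ = 0) :
    ∀ᵐ ω ∂μ, ∫ ω' in B, φ ω' ∂condExpKernel μ m ω = 0 := by
  have hcond : 0 =ᵐ[μ] μ[B.indicator φ | m] :=
    ae_eq_condExp_of_forall_setIntegral_eq hm (hφ.indicator hB) (fun _ _ _ ↦ integrableOn_zero)
      (fun D hD _ ↦ by simp [setIntegral_indicator hB, hφB D hD]) aestronglyMeasurable_zero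
  filter_upwards [hcond, condExp_ae_eq_integral_condExpKernel hm (hφ.indicator hB)] with ω h h'
  rw [← integral_indicator hB, ← h', ← h, Pi.zero_apply]

theorem ae_martingale_condExpKernel {T : ℕ} {ℱ : Filtration (Fin (T + 1)) mΩ}
    {M : Fin (T + 1) → Ω → E} (hM : Martingale M ℱ μ) (hm : m ≤ ℱ 0)
    (hgen : ∀ t, @MeasurableSpace.CountablyGenerated Ω (ℱ t)) :
    ∀ᵐ ω ∂μ, Martingale M ℱ (condExpKernel μ m ω) := by
  obtain ⟨hadp, hint, hzero⟩ := martingale_iff_forall_setIntegral_sub_eq_zero.1 hM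
  -- Countable generating π-systems make the martingale property a countable family of identities,
  -- so that their exceptional null sets add up to a null set.
  choose S hS_count hS_pi hS_univ hS_gen using fun t ↦
    @exists_countable_isPiSystem_generateFrom_eq Ω (ℱ t) (hgen t)
  have hS_meas : ∀ t, ∀ B ∈ S t, MeasurableSet[ℱ t] B := fun t B hB ↦ by
    rw [hS_gen t]
    exact MeasurableSpace.measurableSet_generateFrom hB
  have hm' : m ≤ mΩ := hm.trans (ℱ.le 0)
  have hint_ae : ∀ᵐ ω ∂μ, ∀ t, Integrable (M t) (condExpKernel μ m ω) :=
    ae_all_iff.2 fun t ↦ (hint t).condExpKernel_ae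
  have hzero_ae : ∀ᵐ ω ∂μ, ∀ t : Fin T, ∀ B ∈ S t.castSucc,
      ∫ ω' in B, (M t.succ ω' - M t.castSucc ω') ∂condExpKernel μ m ω = 0 :=
    ae_all_iff.2 fun t ↦ (ae_ball_iff (hS_count _)).2 fun B hB ↦
      ae_setIntegral_condExpKernel_eq_zero hm' ((hint _).sub (hint _))
        (ℱ.le _ _ (hS_meas _ B hB)) fun D hD ↦ hzero t _
          ((hm.trans (ℱ.mono (Fin.zero_le _)) D hD).inter (hS_meas _ B hB))
  filter_upwards [hint_ae, hzero_ae] with ω hωint hωzero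
  exact martingale_iff_forall_setIntegral_sub_eq_zero.2 ⟨hadp, hωint, fun t B hB ↦
    setIntegral_eq_zero_of_generateFrom ((hωint _).sub (hωint _)) (ℱ.le _) (hS_gen _) (hS_pi _)
      (hS_univ _) (hωzero t) hB⟩

end Conditioning

namespace MartLaw

section Algebra

variable {X F : Type*} [AddCommGroup X] [Module ℝ X] [AddCommGroup F] [Module ℝ F] {T : ℕ} {x₀ : X}

/-- The integral `μ[g]` of a vector-valued function on path space. -/
def integral (ν : MartLaw X T x₀) (g : (Fin (T + 1) → X) → F) : F :=
  ∑ π ∈ ν.supp, ν.w π • g π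

theorem mem_supp_of_w_ne_zero (ν : MartLaw X T x₀) {π : Fin (T + 1) → X} (hπ : ν.w π ≠ 0) :
    π ∈ ν.supp :=
  not_imp_comm.1 (ν.zero_off π) hπ

theorem apply_zero_of_w_ne_zero (ν : MartLaw X T x₀) {π : Fin (T + 1) → X} (hπ : ν.w π ≠ 0) :
    π 0 = x₀ :=
  ν.init π (ν.mem_supp_of_w_ne_zero hπ) hπ

theorem integral_congr (ν : MartLaw X T x₀) {g g' : (Fin (T + 1) → X) → F}
    (h : ∀ π, ν.w π ≠ 0 → g π = g' π) : ν.integral g = ν.integral g' := by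
  refine Finset.sum_congr rfl fun π _ ↦ ?_
  by_cases hπ : ν.w π = 0
  · rw [hπ, zero_smul, zero_smul]
  · rw [h π hπ]

theorem integral_const (ν : MartLaw X T x₀) (c : F) : ν.integral (fun _ ↦ c) = c := by
  rw [integral, ← Finset.sum_smul, ν.total, one_smul]

theorem integral_smul_sub_eq_zero (ν : MartLaw X T x₀) (t : Fin T) {h : (Fin (T + 1) → X) → ℝ}
    (hh : DependsOn h (Set.Iic t.castSucc)) :
    ν.integral (fun π ↦ h π • (π t.succ - π t.castSucc)) = 0 := by
  simpa only [integral, smul_smul] using ν.mart t h fun _ _ hπ ↦ hh hπ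

/-- The weights of a simple martingale law, as a finitely supported function. -/
noncomputable def weights (ν : MartLaw X T x₀) : (Fin (T + 1) → X) →₀ ℝ :=
  Finsupp.onFinset ν.supp ν.w fun _ ↦ ν.mem_supp_of_w_ne_zero

theorem linearCombination_weights (ν : MartLaw X T x₀) (g : (Fin (T + 1) → X) → F) :
    Finsupp.linearCombination ℝ g ν.weights = ν.integral g :=
  Finsupp.onFinset_sum _ fun _ ↦ zero_smul ℝ _

open Classical in
/-- The law of the constant martingale. -/
noncomputable def constant (T : ℕ) (x₀ : X) : MartLaw X T x₀ where
  supp := {fun _ ↦ x₀}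
  w π := if π = fun _ ↦ x₀ then 1 else 0
  nonneg π := by positivity
  zero_off π hπ := if_neg (Finset.notMem_singleton.1 hπ)
  total := by simp
  init π hπ _ := by rw [Finset.mem_singleton.1 hπ]
  mart t h _ := by simp

theorem eq_of_constant_w_ne_zero {π : Fin (T + 1) → X} (hπ : (constant T x₀).w π ≠ 0) :
    π = fun _ ↦ x₀ :=
  Finset.mem_singleton.1 (mem_supp_of_w_ne_zero (constant T x₀) hπ :)

theorem integral_constant (g : (Fin (T + 1) → X) → F) :
    (constant T x₀).integral g = g fun _ ↦ x₀ := by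
  simp [integral, constant]

section Concat

variable {ι : Type*} [Fintype ι] {l : ι → ℝ} {x : ι → X}

/-- The weights of the law that starts at `x₀`, picks an index `i` with probability `l i`, and then
follows a path drawn from `ν i`. -/
noncomputable def concatWeights (x₀ : X) (l : ι → ℝ) (ν : ∀ i, MartLaw X T (x i)) :
    (Fin (T + 2) → X) →₀ ℝ :=
  ∑ i, l i • (ν i).weights.mapDomain (vecCons x₀)

theorem linearCombination_concatWeights (ν : ∀ i, MartLaw X T (x i)) (g : (Fin (T + 2) → X) → F) :
    Finsupp.linearCombination ℝ g (concatWeights x₀ l ν) =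
      ∑ i, l i • (ν i).integral fun τ ↦ g (vecCons x₀ τ) := by
  simp only [concatWeights, map_sum, map_smul, Finsupp.linearCombination_mapDomain,
    linearCombination_weights, Function.comp_def]

theorem concatWeights_nonneg (hl : ∀ i, 0 ≤ l i) (ν : ∀ i, MartLaw X T (x i)) :
    0 ≤ concatWeights x₀ l ν :=
  Finset.sum_nonneg fun i _ ↦ smul_nonneg (hl i) (Finsupp.mapDomain_nonneg (ν i).nonneg)

theorem exists_w_ne_zero_of_concatWeights_ne_zero (ν : ∀ i, MartLaw X T (x i))
    {π : Fin (T + 2) → X} (hπ : concatWeights x₀ l ν π ≠ 0) :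
    ∃ i τ, (ν i).w τ ≠ 0 ∧ vecCons x₀ τ = π := by
  classical
  rw [concatWeights, Finsupp.finsetSum_apply] at hπ
  obtain ⟨i, -, hi⟩ := Finset.exists_ne_zero_of_sum_ne_zero hπ
  obtain ⟨τ, hτ, hτπ⟩ := Finset.mem_image.1 <| Finsupp.mapDomain_support <|
    Finsupp.mem_support_iff.2 (right_ne_zero_of_mul hi)
  exact ⟨i, τ, Finsupp.mem_support_iff.1 hτ, hτπ⟩

theorem integral_smul_vecCons_succ_sub_eq_zero {y : X} (ν : MartLaw X T y) (t : Fin T)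
    {h : (Fin (T + 2) → X) → ℝ} (hh : DependsOn h (Set.Iic t.succ.castSucc)) :
    ν.integral (fun τ ↦ h (vecCons x₀ τ) •
      (vecCons x₀ τ t.succ.succ - vecCons x₀ τ t.succ.castSucc)) = 0 := by
  simp only [← Fin.succ_castSucc, cons_val_succ]
  refine ν.integral_smul_sub_eq_zero t fun τ τ' hτ ↦ hh fun s hs ↦ ?_
  cases s using Fin.cases with
  | zero => rfl
  | succ s => exact hτ s (Fin.succ_le_succ_iff.1 hs)

theorem integral_smul_vecCons_one_sub_zero {y : X} (ν : MartLaw X T y) {h : (Fin (T + 2) → X) → ℝ}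
    (hh : DependsOn h (Set.Iic 0)) :
    ν.integral (fun τ ↦ h (vecCons x₀ τ) •
      (vecCons x₀ τ 1 - vecCons x₀ τ 0)) = h (fun _ ↦ x₀) • (y - x₀) := by
  rw [← ν.integral_const (h (fun _ ↦ x₀) • (y - x₀))]
  refine ν.integral_congr fun τ hτ ↦ ?_
  have hcons : h (vecCons x₀ τ) = h fun _ ↦ x₀ := hh fun s hs ↦ by
    rw [le_antisymm hs (Fin.zero_le s), cons_val_zero]
  rw [hcons, cons_val_one, cons_val_zero, ν.apply_zero_of_w_ne_zero hτ]

theorem linearCombination_concatWeights_smul_sub_eq_zero (hl_sum : ∑ i, l i = 1)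
    (hx : ∑ i, l i • x i = x₀) (ν : ∀ i, MartLaw X T (x i)) (t : Fin (T + 1))
    {h : (Fin (T + 2) → X) → ℝ} (hh : DependsOn h (Set.Iic t.castSucc)) :
    Finsupp.linearCombination ℝ (fun π ↦ h π • (π t.succ - π t.castSucc))
      (concatWeights x₀ l ν) = 0 := by
  rw [linearCombination_concatWeights]
  cases t using Fin.cases with
  | zero =>
    have hincr : ∑ i, l i • (x i - x₀) = 0 := by
      simp only [smul_sub, Finset.sum_sub_distrib, hx, ← Finset.sum_smul, hl_sum, one_smul,
        sub_self]
    calc _ = ∑ i, l i • h (fun _ ↦ x₀) • (x i - x₀) :=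
          Finset.sum_congr rfl fun i _ ↦ congrArg _ (integral_smul_vecCons_one_sub_zero (ν i) hh)
      _ = 0 := by simp only [smul_comm (l _), ← Finset.smul_sum, hincr, smul_zero]
  | succ t =>
    exact Finset.sum_eq_zero fun i _ ↦ by
      rw [integral_smul_vecCons_succ_sub_eq_zero (ν i) t hh, smul_zero]

/-- The law of the martingale that starts at the barycentre `x₀` of the points `x i` with weights
`l i`, jumps to `x i` with probability `l i`, and then follows a path drawn from `ν i`. -/
noncomputable def concat (hl : ∀ i, 0 ≤ l i) (hl_sum : ∑ i, l i = 1) (hx : ∑ i, l i • x i = x₀)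
    (ν : ∀ i, MartLaw X T (x i)) : MartLaw X (T + 1) x₀ where
  supp := (concatWeights x₀ l ν).support
  w := concatWeights x₀ l ν
  nonneg := concatWeights_nonneg hl ν
  zero_off _ := Finsupp.notMem_support_iff.1
  total := by
    have := linearCombination_concatWeights (x₀ := x₀) (l := l) ν fun _ ↦ (1 : ℝ)
    simpa [Finsupp.linearCombination_apply, Finsupp.sum, integral_const, hl_sum] using this
  init π _ hπ := by
    obtain ⟨i, τ, -, rfl⟩ := exists_w_ne_zero_of_concatWeights_ne_zero ν hπ
    rfl
  mart t h hh := by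
    have := linearCombination_concatWeights_smul_sub_eq_zero hl_sum hx ν t (h := h) @hh
    simpa only [Finsupp.linearCombination_apply, Finsupp.sum, smul_smul] using this

theorem integral_concat (hl : ∀ i, 0 ≤ l i) (hl_sum : ∑ i, l i = 1) (hx : ∑ i, l i • x i = x₀)
    (ν : ∀ i, MartLaw X T (x i)) (g : (Fin (T + 2) → X) → F) :
    (concat hl hl_sum hx ν).integral g =
      ∑ i, l i • (ν i).integral fun τ ↦ g (vecCons x₀ τ) :=
  (Finsupp.linearCombination_apply ℝ (concatWeights x₀ l ν)).symm.trans
    (linearCombination_concatWeights ν g)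

end Concat

end Algebra

end MartLaw

section MeasurableVecCons

variable {X : Type*} [MeasurableSpace X] {n : ℕ}

theorem measurable_vecCons (x : X) : Measurable (vecCons x : (Fin n → X) → Fin (n + 1) → X) :=
  measurable_pi_lambda _ fun i ↦ by
    cases i using Fin.cases with
    | zero => exact measurable_const
    | succ i => exact measurable_pi_apply i

theorem measurable_vecTail : Measurable (vecTail : (Fin (n + 1) → X) → Fin n → X) :=
  measurable_pi_lambda _ fun i ↦ measurable_pi_apply i.succ

end MeasurableVecCons

section MartingaleLaw

variable {X : Type*} [NormedAddCommGroup X] [NormedSpace ℝ X] [MeasurableSpace X]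

theorem measurable_path_of_martingale [BorelSpace X] {Ω ι : Type*} {mΩ : MeasurableSpace Ω}
    {μ : Measure Ω} [Preorder ι] {ℱ : Filtration ι mΩ} {M : ι → Ω → X} (hM : Martingale M ℱ μ) :
    Measurable fun ω t ↦ M t ω :=
  measurable_pi_lambda _ fun t ↦ (hM.1 t).measurable.mono (ℱ.le t) le_rfl

theorem martingale_piLE_map [BorelSpace X] [SecondCountableTopology X] [CompleteSpace X]
    {Ω ι κ : Type*} {mΩ : MeasurableSpace Ω} {μ : Measure Ω} [IsFiniteMeasure μ] [Preorder ι]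
    [Preorder κ] {ℱ : Filtration κ mΩ} {M : κ → Ω → X} (hM : Martingale M ℱ μ) {e : ι → κ}
    (he : Monotone e) :
    Martingale (fun t π ↦ π t) (Filtration.piLE (X := fun _ : ι ↦ X))
      (μ.map fun ω t ↦ M (e t) ω) := by
  have hpath : Measurable fun ω t ↦ M (e t) ω :=
    measurable_pi_lambda _ fun t ↦ measurable_pi_iff.1 (measurable_path_of_martingale hM) (e t)
  have hadp : StronglyAdapted (Filtration.piLE (X := fun _ : ι ↦ X)) fun t π ↦ π t := fun t ↦
    (measurable_apply_piLE le_rfl).stronglyMeasurable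
  have hint : ∀ t, Integrable (fun π : ι → X ↦ π t) (μ.map fun ω t ↦ M (e t) ω) := fun t ↦
    (integrable_map_measure (measurable_pi_apply t).aestronglyMeasurable hpath.aemeasurable).2
      (hM.integrable (e t))
  refine ⟨hadp, fun i j hij ↦ (ae_eq_condExp_of_forall_setIntegral_eq (Filtration.le _ _) (hint j)
    (fun _ _ _ ↦ (hint i).integrableOn) (fun B hB _ ↦ ?_) (hadp i).aestronglyMeasurable).symm⟩
  have hB' : MeasurableSet[ℱ (e i)] ((fun ω t ↦ M (e t) ω) ⁻¹' B) :=
    measurable_piLE_iff.2 (fun k hk ↦ (hM.1 (e k)).measurable.mono (ℱ.mono (he hk)) le_rfl) hB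
  rw [setIntegral_map (Filtration.le _ _ _ hB) (measurable_pi_apply i).aestronglyMeasurable
      hpath.aemeasurable, setIntegral_map (Filtration.le _ _ _ hB)
      (measurable_pi_apply j).aestronglyMeasurable hpath.aemeasurable]
  exact hM.setIntegral_eq (he hij) hB'

/-- `P` is the law on path space of a martingale `M₀, …, M_T` with `M₀ = x₀`, in the sense that the
coordinate process is such a martingale for its natural filtration. -/
structure IsMartingaleLaw {T : ℕ} (x₀ : X) (P : Measure (Fin (T + 1) → X)) : Prop
    extends IsProbabilityMeasure P where
  init : ∀ᵐ π ∂P, π 0 = x₀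
  martingale : Martingale (fun t π ↦ π t) (Filtration.piLE (X := fun _ : Fin (T + 1) ↦ X)) P

variable {T : ℕ} {x₀ : X}

theorem isMartingaleLaw_map [BorelSpace X] [SecondCountableTopology X] [CompleteSpace X]
    {Ω : Type*} {mΩ : MeasurableSpace Ω} {μ : Measure Ω} [IsProbabilityMeasure μ]
    {ℱ : Filtration (Fin (T + 1)) mΩ} {M : Fin (T + 1) → Ω → X} (hM : Martingale M ℱ μ)
    (hM0 : ∀ᵐ ω ∂μ, M 0 ω = x₀) : IsMartingaleLaw x₀ (μ.map fun ω t ↦ M t ω) where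
  toIsProbabilityMeasure :=
    Measure.isProbabilityMeasure_map (measurable_path_of_martingale hM).aemeasurable
  init := (ae_map_iff (measurable_path_of_martingale hM).aemeasurable
    (measurable_pi_apply 0 (measurableSet_singleton x₀))).2 hM0
  martingale := martingale_piLE_map hM monotone_id

namespace IsMartingaleLaw

theorem integral_apply [CompleteSpace X] {P : Measure (Fin (T + 1) → X)}
    (hP : IsMartingaleLaw x₀ P) (t : Fin (T + 1)) : ∫ π, π t ∂P = x₀ := by
  have := hP.toIsProbabilityMeasure
  have h := hP.martingale.setIntegral_eq (Fin.zero_le t) MeasurableSet.univ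
  rw [setIntegral_univ, setIntegral_univ, integral_congr_ae hP.init] at h
  simpa using h.symm

theorem map_vecCons_map_vecTail {P : Measure (Fin (T + 2) → X)} (hP : IsMartingaleLaw x₀ P) :
    (P.map vecTail).map (vecCons x₀) = P := by
  rw [Measure.map_map (measurable_vecCons x₀) measurable_vecTail]
  have : vecCons x₀ ∘ vecTail =ᵐ[P] id := hP.init.mono fun π hπ ↦ by
    rw [Function.comp_apply, ← hπ]
    exact cons_head_tail π
  rw [Measure.map_congr this, Measure.map_id]

end IsMartingaleLaw

section Representation
variable [BorelSpace X]

theorem ae_isMartingaleLaw_condExpKernel [SecondCountableTopology X] [CompleteSpace X]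
    {Q : Measure (Fin (T + 1) → X)} [IsFiniteMeasure Q]
    (hQ : Martingale (fun t π ↦ π t) (Filtration.piLE (X := fun _ : Fin (T + 1) ↦ X)) Q) :
    ∀ᵐ τ ∂Q, IsMartingaleLaw (τ 0) (condExpKernel Q
      (Filtration.piLE (X := fun _ : Fin (T + 1) ↦ X) 0) τ) := by
  filter_upwards [ae_martingale_condExpKernel hQ le_rfl fun t ↦ countablyGenerated_piLE t,
    ae_ae_condExpKernel_eq (Filtration.le _ 0) (measurable_apply_piLE (X := fun _ ↦ X) le_rfl)]
    with τ hmart hinit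
  exact ⟨inferInstance, hinit.mono fun _ h ↦ h.symm, hmart⟩

theorem exists_convexCombination_isMartingaleLaw [FiniteDimensional ℝ X]
    {Q : Measure (Fin (T + 1) → X)} [IsProbabilityMeasure Q]
    (hQ : Martingale (fun t π ↦ π t) (Filtration.piLE (X := fun _ : Fin (T + 1) ↦ X)) Q)
    {g : (Fin (T + 1) → X) → ℝ} (hg : Integrable g Q) {p : (Fin (T + 1) → X) → Prop}
    (hp : ∀ᵐ τ ∂Q, p τ) :
    ∃ (ι : Type) (_ : Fintype ι) (l : ι → ℝ) (x : ι → X) (κ : ι → Measure (Fin (T + 1) → X)),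
      (∀ i, 0 ≤ l i) ∧ ∑ i, l i = 1 ∧
      (∀ i, IsMartingaleLaw (x i) (κ i) ∧ Integrable g (κ i) ∧ ∀ᵐ τ ∂κ i, p τ) ∧
      ∑ i, l i • x i = ∫ τ, τ 0 ∂Q ∧ ∑ i, l i • ∫ τ, g τ ∂κ i = ∫ τ, g τ ∂Q := by
  have := FiniteDimensional.complete ℝ X
  let κ := condExpKernel Q (Filtration.piLE (X := fun _ : Fin (T + 1) ↦ X) 0)
  have hκg : Integrable (fun τ ↦ ∫ τ', g τ' ∂κ τ) Q := hg.integral_condExpKernel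
  have hκ : ∀ᵐ τ ∂Q, IsMartingaleLaw (τ 0) (κ τ) ∧ Integrable g (κ τ) ∧ ∀ᵐ τ' ∂κ τ, p τ' :=
    (ae_isMartingaleLaw_condExpKernel hQ).and <| hg.condExpKernel_ae.and <|
      ae_ae_condExpKernel (Filtration.le _ 0) hp
  obtain ⟨ι, _, l, z, hl, hl_sum, hz, hlz⟩ :=
    exists_convexCombination_eq_integral ((hQ.integrable 0).prodMk hκg) hκ
  rw [integral_pair (hQ.integrable 0) hκg, integral_integral_condExpKernel (Filtration.le _ 0) hg,
    Prod.ext_iff, Prod.fst_sum, Prod.snd_sum] at hlz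
  exact ⟨ι, inferInstance, l, fun i ↦ z i 0, fun i ↦ κ (z i), hl, hl_sum,
    hz, hlz⟩

theorem IsMartingaleLaw.exists_martLaw_integral_eq [FiniteDimensional ℝ X]
    {P : Measure (Fin (T + 1) → X)} (hP : IsMartingaleLaw x₀ P) {g : (Fin (T + 1) → X) → ℝ}
    (hg : Integrable g P) {p : (Fin (T + 1) → X) → Prop} (hp : ∀ᵐ π ∂P, p π) :
    ∃ ν : MartLaw X T x₀, (∀ π, ν.w π ≠ 0 → p π) ∧ ν.integral g = ∫ π, g π ∂P := by
  have := FiniteDimensional.complete ℝ X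
  have := hP.toIsProbabilityMeasure
  induction T generalizing x₀ with
  | zero =>
    have hconst : ∀ᵐ π ∂P, π = fun _ ↦ x₀ := hP.init.mono fun π hπ ↦ by
      funext t
      rw [Fin.fin_one_eq_zero t, hπ]
    obtain ⟨_, rfl, hpx₀⟩ := (hconst.and hp).exists
    refine ⟨.constant 0 x₀, fun π hπ ↦ MartLaw.eq_of_constant_w_ne_zero hπ ▸ hpx₀, ?_⟩
    rw [MartLaw.integral_constant, integral_congr_ae (hconst.mono fun π hπ ↦ congrArg g hπ)]
    simp
  | succ T ih =>
    have htail := (measurable_vecTail (X := X) (n := T + 1)).aemeasurable (μ := P)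
    have hcons := (measurable_vecCons (n := T + 1) x₀).aemeasurable (μ := P.map vecTail)
    have : IsProbabilityMeasure (P.map vecTail) := Measure.isProbabilityMeasure_map htail
    have hmean : ∫ τ, τ 0 ∂P.map vecTail = x₀ := by
      rw [integral_map htail (measurable_pi_apply 0).aestronglyMeasurable]
      exact hP.integral_apply 1
    have hgP : ∫ τ, g (vecCons x₀ τ) ∂P.map vecTail = ∫ π, g π ∂P := by
      rw [← integral_map hcons (hP.map_vecCons_map_vecTail.symm ▸ hg.aestronglyMeasurable),
        hP.map_vecCons_map_vecTail]
    obtain ⟨ι, _, l, x, κ, hl, hl_sum, hκ, hlx, hlg⟩ := exists_convexCombination_isMartingaleLaw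
      (Q := P.map vecTail) (martingale_piLE_map hP.martingale Fin.strictMono_succ.monotone)
      (g := fun τ ↦ g (vecCons x₀ τ))
      ((hP.map_vecCons_map_vecTail.symm ▸ hg).comp_aemeasurable hcons)
      (ae_of_ae_map hcons (hP.map_vecCons_map_vecTail.symm ▸ hp))
    choose ν hνp hν using fun i ↦
      ih (hκ i).1 (hκ i).2.1 (hκ i).2.2 (hκ i).1.toIsProbabilityMeasure
    refine ⟨.concat hl hl_sum (hlx.trans hmean) ν, fun π hπ ↦ ?_, ?_⟩
    · obtain ⟨i, τ, hτ, rfl⟩ := MartLaw.exists_w_ne_zero_of_concatWeights_ne_zero ν hπ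
      exact hνp i τ hτ
    · rw [MartLaw.integral_concat, ← hgP, ← hlg]
      exact Finset.sum_congr rfl fun i _ ↦ congrArg _ (hν i)

end Representation

end MartingaleLaw

section ERealExpectation

theorem coe_erealPosPart_sub_coe_erealPosPart_neg (x : EReal) :
    (erealPosPart x : EReal) - erealPosPart (-x) = x := by
  induction x with
  | bot => simp [erealPosPart]
  | top => simp [erealPosPart]
  | coe r =>
    simp only [← EReal.coe_neg, erealPosPart, EReal.coe_ne_top, if_false, EReal.toReal_coe,
      EReal.coe_ennreal_ofReal, ← EReal.coe_sub]
    rw [max_zero_sub_max_neg_zero_eq_self]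

theorem erealPosPart_coe_mul {a : ℝ} (ha : 0 ≤ a) (x : EReal) :
    erealPosPart (a * x) = ENNReal.ofReal a * erealPosPart x :=
  EReal.toENNReal_mul (EReal.coe_nonneg.2 ha)

theorem measurable_erealPosPart : Measurable erealPosPart :=
  measurable_ereal_toENNReal

theorem coe_real_ereal_sum {ι : Type*} (s : Finset ι) (a : ι → ℝ) :
    ((∑ i ∈ s, a i : ℝ) : EReal) = ∑ i ∈ s, (a i : EReal) :=
  map_sum (⟨⟨Real.toEReal, EReal.coe_zero⟩, EReal.coe_add⟩ : ℝ →+ EReal) a s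

theorem sum_coe_ennreal_sub_coe_ennreal {ι : Type*} (s : Finset ι) (a b : ι → ENNReal) :
    ∑ i ∈ s, ((a i : EReal) - b i) =
      ((∑ i ∈ s, a i : ENNReal) : EReal) - ((∑ i ∈ s, b i : ENNReal) : EReal) := by
  induction s using Finset.cons_induction with
  | empty => simp
  | cons i s hi ih =>
    rw [Finset.sum_cons, Finset.sum_cons, Finset.sum_cons, ih, EReal.coe_ennreal_add,
      EReal.coe_ennreal_add, EReal.add_sub_add_comm (.inl (EReal.coe_ennreal_ne_bot _))
        (.inr (EReal.coe_ennreal_ne_bot _))]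

variable {Ω : Type*} [MeasurableSpace Ω] {μ : Measure Ω}

theorem erealExp_map {Ω' : Type*} [MeasurableSpace Ω'] {φ : Ω → Ω'} (hφ : Measurable φ)
    {f : Ω' → EReal} (hf : Measurable f) : erealExp (μ.map φ) f = erealExp μ fun ω ↦ f (φ ω) := by
  have hpos : Measurable fun x ↦ erealPosPart (f x) := measurable_erealPosPart.comp hf
  have hneg : Measurable fun x ↦ erealPosPart (-f x) := measurable_erealPosPart.comp hf.neg
  rw [erealExp, erealExp, lintegral_map hpos hφ, lintegral_map hneg hφ]

theorem tendsto_lintegral_min_natCast {u : Ω → ENNReal} (hu : AEMeasurable u μ) :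
    Tendsto (fun N : ℕ ↦ ∫⁻ ω, min (u ω) N ∂μ) atTop (𝓝 (∫⁻ ω, u ω ∂μ)) := by
  refine lintegral_tendsto_of_tendsto_of_monotone (fun N ↦ hu.min aemeasurable_const)
    (.of_forall fun ω N N' hN ↦ min_le_min_left _ (Nat.cast_le.2 hN)) (.of_forall fun ω ↦ ?_)
  simpa using (tendsto_const_nhds (x := u ω)).min ENNReal.tendsto_nat_nhds_top

theorem lintegral_sub_lintegral_le_of_forall_integral_le {f : Ω → EReal} {u v : Ω → ENNReal}
    (hu : AEMeasurable u μ) (hu_top : ∫⁻ ω, u ω ∂μ ≠ ⊤) (hv : AEMeasurable v μ)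
    (hv_top : ∫⁻ ω, v ω ∂μ ≠ ⊤) (huv : ∀ ω, (u ω : EReal) - v ω ≤ f ω) {b : EReal}
    (h : ∀ g : Ω → ℝ, Integrable g μ → (∀ᵐ ω ∂μ, (g ω : EReal) ≤ f ω) →
      ((∫ ω, g ω ∂μ : ℝ) : EReal) ≤ b) :
    ((∫⁻ ω, u ω ∂μ : ENNReal) : EReal) - ((∫⁻ ω, v ω ∂μ : ENNReal) : EReal) ≤ b := by
  have hu_int := integrable_toReal_of_lintegral_ne_top hu hu_top
  have hv_int := integrable_toReal_of_lintegral_ne_top hv hv_top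
  have hle : ∀ᵐ ω ∂μ, (((u ω).toReal - (v ω).toReal : ℝ) : EReal) ≤ f ω := by
    filter_upwards [ae_lt_top' hu hu_top, ae_lt_top' hv hv_top] with ω huω hvω
    rw [EReal.coe_sub, EReal.coe_ennreal_toReal huω.ne, EReal.coe_ennreal_toReal hvω.ne]
    exact huv ω
  have := h _ (hu_int.sub' hv_int) hle
  rwa [integral_sub hu_int hv_int, integral_toReal hu (ae_lt_top' hu hu_top),
    integral_toReal hv (ae_lt_top' hv hv_top), EReal.coe_sub, EReal.coe_ennreal_toReal hu_top,
    EReal.coe_ennreal_toReal hv_top] at this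

theorem erealExp_le_of_forall_integral_le [IsFiniteMeasure μ] {f : Ω → EReal}
    (hf : AEMeasurable f μ) {b : EReal}
    (h : ∀ g : Ω → ℝ, Integrable g μ → (∀ᵐ ω ∂μ, (g ω : EReal) ≤ f ω) →
      ((∫ ω, g ω ∂μ : ℝ) : EReal) ≤ b) :
    erealExp μ f ≤ b := by
  have hpos := measurable_erealPosPart.comp_aemeasurable hf
  have hneg := measurable_erealPosPart.comp_aemeasurable hf.neg
  by_cases hneg_top : ∫⁻ ω, erealPosPart (-f ω) ∂μ = ⊤
  · simp [erealExp, hneg_top]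
  have hle (N : ℕ) : ((∫⁻ ω, min (erealPosPart (f ω)) N ∂μ : ENNReal) : EReal) ≤
      b + ((∫⁻ ω, erealPosPart (-f ω) ∂μ : ENNReal) : EReal) := by
    have hmin_top : ∫⁻ ω, min (erealPosPart (f ω)) N ∂μ ≠ ⊤ :=
      ne_top_of_le_ne_top (b := ∫⁻ _, (N : ENNReal) ∂μ) (by simp [ENNReal.mul_eq_top])
        (lintegral_mono fun _ ↦ min_le_right _ _)
    refine EReal.sub_le_iff_le_add (.inl (EReal.coe_ennreal_ne_bot _))
      (.inl (EReal.coe_ennreal_eq_top_iff.not.2 hneg_top)) |>.1 <|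
      lintegral_sub_lintegral_le_of_forall_integral_le (hpos.min aemeasurable_const) hmin_top hneg
        hneg_top (fun ω ↦ ?_) h
    calc _ ≤ (erealPosPart (f ω) : EReal) - erealPosPart (-f ω) :=
          EReal.sub_le_sub (EReal.coe_ennreal_le_coe_ennreal_iff.2 (min_le_left _ _)) le_rfl
      _ = f ω := coe_erealPosPart_sub_coe_erealPosPart_neg _
  exact EReal.sub_le_of_le_add <| le_of_tendsto'
    ((continuous_coe_ennreal_ereal.tendsto _).comp (tendsto_lintegral_min_natCast hpos)) hle

end ERealExpectation

namespace MartLaw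

variable {X : Type*} [NormedAddCommGroup X] [NormedSpace ℝ X] {T : ℕ} {x₀ : X}

theorem coe_integral_le_exp (ν : MartLaw X T x₀) {g : (Fin (T + 1) → X) → ℝ}
    {f : (Fin (T + 1) → X) → EReal} (h : ∀ π, ν.w π ≠ 0 → (g π : EReal) ≤ f π) :
    ((ν.integral g : ℝ) : EReal) ≤ ν.exp f := by
  rw [integral, coe_real_ereal_sum]
  refine Finset.sum_le_sum fun π _ ↦ ?_
  by_cases hπ : ν.w π = 0
  · simp [hπ]
  · rw [smul_eq_mul, EReal.coe_mul]
    exact mul_le_mul_of_nonneg_left (h π hπ) (EReal.coe_nonneg.2 (ν.nonneg π))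

variable [MeasurableSpace X]

/-- A simple martingale law as a measure on path space. -/
noncomputable def toMeasure (ν : MartLaw X T x₀) : Measure (Fin (T + 1) → X) :=
  ∑ π ∈ ν.supp, ENNReal.ofReal (ν.w π) • Measure.dirac π

variable [MeasurableSingletonClass X]

theorem lintegral_toMeasure (ν : MartLaw X T x₀) (u : (Fin (T + 1) → X) → ENNReal) :
    ∫⁻ π, u π ∂ν.toMeasure = ∑ π ∈ ν.supp, ENNReal.ofReal (ν.w π) * u π := by
  simp only [toMeasure, lintegral_finsetSum_measure, lintegral_smul_measure, lintegral_dirac,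
    smul_eq_mul]

theorem ae_toMeasure {ν : MartLaw X T x₀} {p : (Fin (T + 1) → X) → Prop}
    (hp : ∀ π, ν.w π ≠ 0 → p π) : ∀ᵐ π ∂ν.toMeasure, p π := by
  refine ae_finsetSum_measure_iff.2 fun π _ ↦ ?_
  by_cases hπ : ν.w π = 0
  · simp [hπ]
  · exact Measure.ae_smul_measure (by simpa using hp π hπ) _

theorem integrable_toMeasure {F : Type*} [NormedAddCommGroup F] (ν : MartLaw X T x₀)
    (g : (Fin (T + 1) → X) → F) : Integrable g ν.toMeasure :=
  integrable_finsetSum_measure.2 fun _ _ ↦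
    (integrable_dirac enorm_lt_top).smul_measure ENNReal.ofReal_ne_top

theorem integral_toMeasure {F : Type*} [NormedAddCommGroup F] [NormedSpace ℝ F] [CompleteSpace F]
    (ν : MartLaw X T x₀) (g : (Fin (T + 1) → X) → F) :
    ∫ π, g π ∂ν.toMeasure = ν.integral g := by
  rw [toMeasure, integral_finsetSum_measure fun _ _ ↦
    (integrable_dirac enorm_lt_top).smul_measure ENNReal.ofReal_ne_top]
  simp only [integral_smul_measure, integral_dirac, ENNReal.toReal_ofReal (ν.nonneg _), integral]

theorem exp_eq_erealExp_toMeasure (ν : MartLaw X T x₀) (f : (Fin (T + 1) → X) → EReal) :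
    ν.exp f = erealExp ν.toMeasure f := by
  rw [erealExp, lintegral_toMeasure, lintegral_toMeasure, ← sum_coe_ennreal_sub_coe_ennreal, exp]
  refine Finset.sum_congr rfl fun π _ ↦ ?_
  rw [← erealPosPart_coe_mul (ν.nonneg π), ← erealPosPart_coe_mul (ν.nonneg π), mul_neg,
    coe_erealPosPart_sub_coe_erealPosPart_neg]

instance (ν : MartLaw X T x₀) : IsProbabilityMeasure ν.toMeasure where
  measure_univ := by
    simp_rw [← lintegral_one, lintegral_toMeasure, mul_one,
      ← ENNReal.ofReal_sum_of_nonneg fun π _ ↦ ν.nonneg π, ν.total, ENNReal.ofReal_one]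

theorem isMartingaleLaw_toMeasure [BorelSpace X] [SecondCountableTopology X] [CompleteSpace X]
    (ν : MartLaw X T x₀) : IsMartingaleLaw x₀ ν.toMeasure where
  init := ae_toMeasure fun _ ↦ ν.apply_zero_of_w_ne_zero
  martingale := by
    refine martingale_iff_forall_setIntegral_sub_eq_zero.2 ⟨fun t ↦
      (measurable_apply_piLE le_rfl).stronglyMeasurable, fun t ↦ ν.integrable_toMeasure _,
      fun t B hB ↦ ?_⟩
    have hdep : DependsOn (B.indicator fun _ ↦ (1 : ℝ)) (Set.Iic t.castSucc) :=
      (measurable_const.indicator hB).dependsOn_of_piLE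
    rw [← MeasureTheory.integral_indicator (Filtration.le _ _ _ hB), integral_toMeasure,
      ← ν.integral_smul_sub_eq_zero t hdep]
    exact ν.integral_congr fun π _ ↦ by by_cases hπ : π ∈ B <;> simp [hπ]

end MartLaw

theorem IsMartingaleLaw.erealExp_le_iSup_exp {X : Type*} [NormedAddCommGroup X] [NormedSpace ℝ X]
    [FiniteDimensional ℝ X] [MeasurableSpace X] [BorelSpace X] {T : ℕ} {x₀ : X}
    {P : Measure (Fin (T + 1) → X)} (hP : IsMartingaleLaw x₀ P) {f : (Fin (T + 1) → X) → EReal}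
    (hf : AEMeasurable f P) : erealExp P f ≤ ⨆ ν : MartLaw X T x₀, ν.exp f := by
  have := hP.toIsProbabilityMeasure
  refine erealExp_le_of_forall_integral_le hf fun g hg hgf ↦ ?_
  obtain ⟨ν, hν, hνg⟩ := hP.exists_martLaw_integral_eq hg hgf
  rw [← hνg]
  exact (ν.coe_integral_le_exp hν).trans (le_iSup (fun ν : MartLaw X T x₀ ↦ ν.exp f) ν)

universe u v

theorem sup_martLaw_eq_sup_martingales_general {X : Type u} [NormedAddCommGroup X]
    [NormedSpace ℝ X] [FiniteDimensional ℝ X] [MeasurableSpace X] [BorelSpace X] (T : ℕ) (x₀ : X)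
    (f : (Fin (T + 1) → X) → EReal) (hf : Measurable f) :
    (∀ (Ω : Type v) (m0 : MeasurableSpace Ω) (μ : Measure Ω),
        IsProbabilityMeasure μ →
        ∀ (ℱ : Filtration (Fin (T + 1)) m0) (M : Fin (T + 1) → Ω → X),
          Martingale M ℱ μ → (∀ᵐ ω ∂μ, M 0 ω = x₀) →
          erealExp μ (fun ω ↦ f fun t ↦ M t ω) ≤ ⨆ ν : MartLaw X T x₀, ν.exp f) ∧
    (∀ b : EReal,
      (∀ (Ω : Type u) (m0 : MeasurableSpace Ω) (μ : Measure Ω),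
        IsProbabilityMeasure μ →
        ∀ (ℱ : Filtration (Fin (T + 1)) m0) (M : Fin (T + 1) → Ω → X),
          Martingale M ℱ μ → (∀ᵐ ω ∂μ, M 0 ω = x₀) →
          erealExp μ (fun ω ↦ f fun t ↦ M t ω) ≤ b) →
      ⨆ ν : MartLaw X T x₀, ν.exp f ≤ b) := by
  have := FiniteDimensional.complete ℝ X
  refine ⟨fun Ω _ μ _ ℱ M hM hM0 ↦ ?_, fun b hb ↦ iSup_le fun ν ↦ ?_⟩
  · rw [← erealExp_map (measurable_path_of_martingale hM) hf]
    exact (isMartingaleLaw_map hM hM0).erealExp_le_iSup_exp hf.aemeasurable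
  · rw [ν.exp_eq_erealExp_toMeasure]
    exact hb _ _ _ inferInstance _ _ ν.isMartingaleLaw_toMeasure.martingale
      ν.isMartingaleLaw_toMeasure.init

/-- For Borel measurable `f : (ℝⁿ)^{T+1} → EReal`,
`sup_{μ ∈ M^T(x₀)} μ[f] = sup_M E[f(M₀,…,M_T)]`, the right-hand supremum being over all
`ℝⁿ`-valued martingales `M₀,…,M_T` with `M₀ = x₀`, each on its own filtered probability
space. (Equality of the supremum over simple martingale laws with the supremum over
general martingales is expressed by the two clauses below.) -/
theorem sup_martLaw_eq_sup_martingales (n T : ℕ) (x₀ : Fin n → ℝ)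
    (f : (Fin (T + 1) → Fin n → ℝ) → EReal) (hf : Measurable f) :
    (∀ (Ω : Type) (m0 : MeasurableSpace Ω) (μ : Measure Ω),
        IsProbabilityMeasure μ →
        ∀ (ℱ : Filtration (Fin (T + 1)) m0) (M : Fin (T + 1) → Ω → Fin n → ℝ),
          Martingale M ℱ μ → (∀ᵐ ω ∂μ, M 0 ω = x₀) →
          erealExp μ (fun ω => f fun t => M t ω)
            ≤ ⨆ ν : MartLaw (Fin n → ℝ) T x₀, ν.exp f) ∧
    (∀ b : EReal,
      (∀ (Ω : Type) (m0 : MeasurableSpace Ω) (μ : Measure Ω),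
        IsProbabilityMeasure μ →
        ∀ (ℱ : Filtration (Fin (T + 1)) m0) (M : Fin (T + 1) → Ω → Fin n → ℝ),
          Martingale M ℱ μ → (∀ᵐ ω ∂μ, M 0 ω = x₀) →
          erealExp μ (fun ω => f fun t => M t ω) ≤ b) →
      (⨆ ν : MartLaw (Fin n → ℝ) T x₀, ν.exp f) ≤ b) :=
  sup_martLaw_eq_sup_martingales_general T x₀ f hf
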